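/- Let H be a Hopf algebra over a field k and suppose r ∈ H satisfies the 1-dimensional partial comodule equations. Then r is von Neumann regular with quasi-inverse S(r): one has r·S(r)·r = r and S(r)·r·S(r) = S(r). -/

import Mathlib

open TensorProduct

/-- The five 1-dimensional partial comodule equations for an element `r` of a Hopf
algebra `H`: `ε(r) = 1`; `r ⊗ r·S(r) = r₍₁₎ ⊗ r₍₂₎·S(r)`; `r·S(r₍₁₎) ⊗ r₍₂₎ = r·S(r) ⊗ r`;
`r ⊗ S(r)·r = r₍₁₎ ⊗ S(r₍₂₎)·r`; `S(r)·r ⊗ r = S(r)·r₍₁₎ ⊗ r₍₂₎`. -/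
def OneDimPCM (k : Type*) {H : Type*} [Field k] [Ring H] [HopfAlgebra k H] (r : H) : Prop :=
  Coalgebra.counit (R := k) r = 1
  ∧ r ⊗ₜ[k] (r * HopfAlgebra.antipode (R := k) r)
      = Coalgebra.comul (R := k) r * ((1 : H) ⊗ₜ[k] HopfAlgebra.antipode (R := k) r)
  ∧ (r ⊗ₜ[k] (1 : H)) *
        (LinearMap.rTensor H (HopfAlgebra.antipode (R := k)) (Coalgebra.comul (R := k) r))
      = (r * HopfAlgebra.antipode (R := k) r) ⊗ₜ[k] r
  ∧ r ⊗ₜ[k] (HopfAlgebra.antipode (R := k) r * r)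
      = (LinearMap.lTensor H (HopfAlgebra.antipode (R := k)) (Coalgebra.comul (R := k) r))
          * ((1 : H) ⊗ₜ[k] r)
  ∧ (HopfAlgebra.antipode (R := k) r * r) ⊗ₜ[k] r
      = ((HopfAlgebra.antipode (R := k) r) ⊗ₜ[k] (1 : H)) * Coalgebra.comul (R := k) r

/-!
Multiplying the tensor factors of `r·S(r₍₁₎) ⊗ r₍₂₎ = r·S(r) ⊗ r` turns the left side into
`r·(S(r₍₁₎)·r₍₂₎)`, which the antipode axiom collapses to `ε(r) r`. Applying `S` to the second
factor of `S(r)·r₍₁₎ ⊗ r₍₂₎ = S(r)·r ⊗ r` before multiplying gives `S(r)·(r₍₁₎·S(r₍₂₎))`, which the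
other antipode axiom collapses to `ε(r) S(r)`.
-/

section TensorAlgebra

variable {R A : Type*} [CommSemiring R] [Semiring A] [Algebra R A]

theorem mul'_tmul_one_mul (a : A) (x : A ⊗[R] A) :
    LinearMap.mul' R A (a ⊗ₜ[R] (1 : A) * x) = a * LinearMap.mul' R A x := by
  induction x using TensorProduct.induction_on with
  | zero => simp
  | tmul b c => simp [mul_assoc]
  | add x y hx hy => simp only [mul_add, map_add, hx, hy]

theorem lTensor_tmul_one_mul {B C : Type*} [Semiring B] [Algebra R B] [Semiring C] [Algebra R C]
    (f : B →ₗ[R] C) (a : A) (x : A ⊗[R] B) :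
    f.lTensor A (a ⊗ₜ[R] (1 : B) * x) = a ⊗ₜ[R] (1 : C) * f.lTensor A x := by
  induction x using TensorProduct.induction_on with
  | zero => simp
  | tmul b c => simp
  | add x y hx hy => simp only [mul_add, map_add, hx, hy]

end TensorAlgebra

section Antipode

open Coalgebra HopfAlgebra

variable {R A : Type*} [CommSemiring R] [Semiring A] [HopfAlgebra R A] {a b c r : A}

theorem mul_eq_counit_smul_of_tmul_one_mul_rTensor_antipode_comul
    (h : a ⊗ₜ[R] (1 : A) * (antipode R).rTensor A (comul r) = b ⊗ₜ[R] c) :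
    b * c = counit (R := R) r • a :=
  calc
    b * c = LinearMap.mul' R A (a ⊗ₜ[R] (1 : A) * (antipode R).rTensor A (comul r)) := by
      rw [h, LinearMap.mul'_apply]
    _ = a * algebraMap R A (counit r) := by
      rw [mul'_tmul_one_mul, mul_antipode_rTensor_comul_apply]
    _ = counit (R := R) r • a := by rw [← Algebra.commutes, ← Algebra.smul_def]

theorem mul_antipode_eq_counit_smul_of_tmul_one_mul_comul
    (h : a ⊗ₜ[R] (1 : A) * comul r = b ⊗ₜ[R] c) :
    b * antipode R c = counit (R := R) r • a :=
  calc
    b * antipode R c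
        = LinearMap.mul' R A ((antipode R).lTensor A (a ⊗ₜ[R] (1 : A) * comul r)) := by
      rw [h, LinearMap.lTensor_tmul, LinearMap.mul'_apply]
    _ = a * algebraMap R A (counit r) := by
      rw [lTensor_tmul_one_mul, mul'_tmul_one_mul, mul_antipode_lTensor_comul_apply]
    _ = counit (R := R) r • a := by rw [← Algebra.commutes, ← Algebra.smul_def]

theorem stmt10_general
    (h_antipode : r ⊗ₜ[R] (1 : A) * (antipode R).rTensor A (comul r) = (r * antipode R r) ⊗ₜ[R] r)
    (h_comul : (antipode R r * r) ⊗ₜ[R] r = antipode R r ⊗ₜ[R] (1 : A) * comul r) :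
    r * antipode R r * r = counit (R := R) r • r ∧
      antipode R r * r * antipode R r = counit (R := R) r • antipode R r :=
  ⟨mul_eq_counit_smul_of_tmul_one_mul_rTensor_antipode_comul h_antipode,
    mul_antipode_eq_counit_smul_of_tmul_one_mul_comul h_comul.symm⟩

end Antipode

/-- if `r ∈ H` satisfies the 1-dimensional partial comodule equations, then
`r` is von Neumann regular with quasi-inverse `S(r)`: `r·S(r)·r = r` and
`S(r)·r·S(r) = S(r)`. -/
theorem stmt10 (k H : Type*) [Field k] [Ring H] [HopfAlgebra k H]
    (r : H) (hr : OneDimPCM k r) :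
    r * HopfAlgebra.antipode (R := k) r * r = r
    ∧ HopfAlgebra.antipode (R := k) r * r * HopfAlgebra.antipode (R := k) r
        = HopfAlgebra.antipode (R := k) r := by
  obtain ⟨h_counit, -, h_antipode, -, h_comul⟩ := hr
  simpa only [h_counit, one_smul] using stmt10_general h_antipode h_comul
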